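/- Let L = ℚ(ζ₅) be the fifth cyclotomic field. The only pair (x, y) ∈ L × L satisfying −5y² = x·(x² + 22x + 125) is (x, y) = (0, 0). -/

import Mathlib

/-!
Let `K = ℚ(ζ₅)` and let `φ ∈ K` be the golden ratio. As `5 = (2 φ - 1) ^ 2`, the equation
describes, up to the sign of `x`, the `K`-points of `E : y² = x (x² - 22 x + 125)`. A `2`-descent
along the isogeny between `E` and `z² = r (r² + 11 r - 1)`, carried out in the principal ideal
domain `𝓞 K`, in which `2` is inert and whose units are `± φ` and `±1` up to squares, shows that
every point of `E` with `x ≠ 0` is, up to `2`-torsion, the double of another one. If the former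
has slope `m = y / x` and the latter slope `m'`, then `|m'| ≤ |2| max (|m|, 1)` for the `2`-adic
absolute value, whereas a congruence modulo `4` shows that no point with `|m| < 1` can be halved.
So all slopes satisfy `|m| ≥ 1`, although iterated halving makes them arbitrarily small: there is
no point with `x ≠ 0`.
-/

open NumberField

/-! ### Halving points by a `2`-isogeny -/

section Isogeny

variable {F : Type*} [Field F]

/-- `m` is the slope `y / x` of a point `(x, y)` of the curve `y² = x (x² - 22 x + 125)` with
`x ≠ 0`; the ordinate `y = m x` is eliminated from the equation. -/
def IsSlope (m : F) : Prop :=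
  ∃ x, x ≠ 0 ∧ m ^ 2 = x + 125 / x - 22

/-- `(s, t)` is a halving, up to `2`-torsion, of a point of slope `m`: its abscissa is `s ^ 2`, so
that it is the image under the `2`-isogeny `x = (z / r) ^ 2` of a point with `z / r = s` on
`z² = r (r² + 11 r - 1)`; the abscissa of that point is `r = t ^ 2`, so that it is in turn the image
under the dual isogeny `r = (m' / 2) ^ 2` of a point of slope `m' = 2 t`. -/
def IsHalving (m s t : F) : Prop :=
  s ≠ 0 ∧ t ≠ 0 ∧ m ^ 2 = s ^ 2 + 125 / s ^ 2 - 22 ∧ s ^ 2 = t ^ 2 - 1 / t ^ 2 + 11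

theorem exists_sq_eq_sub_inv_add [NeZero (2 : F)] {m s : F} (hs : s ≠ 0)
    (h : m ^ 2 = s ^ 2 + 125 / s ^ 2 - 22) : ∃ r, r ≠ 0 ∧ s ^ 2 = r - 1 / r + 11 := by
  obtain ⟨r, hr⟩ : ∃ r, 2 * r = s * m + s ^ 2 - 11 :=
    ⟨(s * m + s ^ 2 - 11) / 2, mul_div_cancel₀ _ two_ne_zero⟩
  have hms : (s * m) ^ 2 = (s ^ 2 - 11) ^ 2 + 4 := by
    rw [mul_pow, h]; field_simp; ring
  have hr2 : r ^ 2 = (s ^ 2 - 11) * r + 1 :=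
    mul_left_cancel₀ (mul_ne_zero two_ne_zero two_ne_zero)
      (by linear_combination (2 * r + s * m - s ^ 2 + 11) * hr + hms)
  have hr0 : r ≠ 0 := by rintro rfl; simp at hr2
  refine ⟨r, hr0, ?_⟩
  field_simp
  linear_combination -hr2

theorem hundredTwentyFive_ne_zero (h5 : (5 : F) ≠ 0) : (125 : F) ≠ 0 := by
  rw [show (125 : F) = 5 ^ 3 by norm_num]
  exact pow_ne_zero 3 h5

-- Translating `(r, z)` by the `2`-torsion point with abscissa `5 φ - 8 = φ⁻⁵` turns `r` into a
-- square.
theorem exists_sq_eq_of_isSquare_pow_three_mul {φ s r : F} (hφ : φ ^ 2 = φ + 1)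
    (hs : s ≠ 0) (hr : r ≠ 0) (hsr : s ^ 2 = r - 1 / r + 11) (hsq : IsSquare (φ ^ 3 * r)) :
    ∃ s' t, t ≠ 0 ∧ s' ^ 2 * s ^ 2 = 125 ∧ s' ^ 2 = t ^ 2 - 1 / t ^ 2 + 11 := by
  obtain ⟨w, hw⟩ := hsq
  field_simp at hsr
  obtain ⟨d, hd⟩ : ∃ d, d = r - (5 * φ - 8) := ⟨_, rfl⟩
  obtain ⟨e, he⟩ : ∃ e, e = r + (5 * φ + 3) := ⟨_, rfl⟩
  have hde : d * e = s ^ 2 * r := by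
    rw [hd, he]; linear_combination -hsr - 25 * hφ
  have hde0 : d * e ≠ 0 := hde ▸ mul_ne_zero (pow_ne_zero 2 hs) hr
  have hd0 : d ≠ 0 := left_ne_zero_of_mul hde0
  have he0 : e ≠ 0 := right_ne_zero_of_mul hde0
  have hinv : (5 * φ - 8) * (5 * φ + 3) = 1 := by linear_combination 25 * hφ
  have ht : (s * w * (5 - 3 * φ) / d) ^ 2 = (5 * φ - 8) * e / d := by
    field_simp
    linear_combination (-s ^ 2 * (5 - 3 * φ) ^ 2) * hw - (5 * φ - 8) * hde
      + s ^ 2 * r * (9 * φ ^ 3 - 21 * φ ^ 2 + 13 * φ - 8) * hφ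
  have ht0 : (s * w * (5 - 3 * φ) / d) ^ 2 ≠ 0 := by
    rw [ht]; exact div_ne_zero (mul_ne_zero (left_ne_zero_of_mul_eq_one hinv) he0) hd0
  refine ⟨5 * (2 * φ - 1) / s, s * w * (5 - 3 * φ) / d, ne_zero_pow two_ne_zero ht0, ?_, ?_⟩
  · field_simp
    linear_combination 100 * hφ
  · have hinvt : 1 / ((5 * φ - 8) * e / d) = (5 * φ + 3) * d / e := by
      rw [one_div_div, div_eq_div_iff (mul_ne_zero (left_ne_zero_of_mul_eq_one hinv) he0) he0]
      linear_combination -d * e * hinv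
    have hs' : (5 * (2 * φ - 1) / s) ^ 2 = 125 * r / (d * e) := by
      rw [hde]; field_simp; linear_combination 100 * hφ
    rw [ht, hinvt, hs']
    field_simp
    rw [hd, he]
    linear_combination -4 * r * hinv

theorem exists_isHalving_of_isSquare {φ m s r : F} (h5 : (5 : F) ≠ 0) (hφ : φ ^ 2 = φ + 1)
    (hs : s ≠ 0) (hr : r ≠ 0) (hms : m ^ 2 = s ^ 2 + 125 / s ^ 2 - 22)
    (hsr : s ^ 2 = r - 1 / r + 11) (hsq : IsSquare r ∨ IsSquare (φ ^ 3 * r)) :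
    ∃ s t, IsHalving m s t := by
  rcases hsq with hsq | hsq
  · obtain ⟨t, rfl⟩ := hsq.exists_sq
    exact ⟨s, t, hs, ne_zero_pow two_ne_zero hr, hms, hsr⟩
  · obtain ⟨s', t, ht, hss, hst⟩ := exists_sq_eq_of_isSquare_pow_three_mul hφ hs hr hsr hsq
    have hs' : s' ^ 2 ≠ 0 := left_ne_zero_of_mul (hss ▸ hundredTwentyFive_ne_zero h5)
    refine ⟨s', t, ne_zero_pow two_ne_zero hs', ht, ?_, hst⟩
    rw [hms, ← hss, mul_div_cancel_left₀ _ hs', mul_div_cancel_right₀ _ (pow_ne_zero 2 hs)]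
    ring

theorem exists_isHalving [NeZero (2 : F)] {φ : F} (h5 : (5 : F) ≠ 0) (hφ : φ ^ 2 = φ + 1)
    (hX : ∀ m x : F, x ≠ 0 → m ^ 2 = x + 125 / x - 22 → IsSquare x)
    (hR : ∀ s r : F, r ≠ 0 → s ^ 2 = r - 1 / r + 11 →
      (IsSquare r ∨ IsSquare (-r)) ∨ (IsSquare (φ ^ 3 * r) ∨ IsSquare (-(φ ^ 3 * r))))
    {m : F} (hm : IsSlope m) : ∃ s t, IsHalving m s t := by
  obtain ⟨x, hx, hmx⟩ := hm
  obtain ⟨s, rfl⟩ := (hX m x hx hmx).exists_sq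
  have hs : s ≠ 0 := ne_zero_pow two_ne_zero hx
  obtain ⟨r, hr, hsr⟩ := exists_sq_eq_sub_inv_add hs hmx
  rcases or_or_or_comm.mp (hR s r hr hsr) with h | h
  · exact exists_isHalving_of_isSquare h5 hφ hs hr hmx hsr h
  · have hr' : -1 / r ≠ 0 := div_ne_zero (neg_ne_zero.mpr one_ne_zero) hr
    refine exists_isHalving_of_isSquare h5 hφ hs hr' hmx (by rw [hsr, one_div_div]; ring) ?_
    rw [show -1 / r = -r * (1 / r) ^ 2 by field_simp,
      show φ ^ 3 * (-r * (1 / r) ^ 2) = -(φ ^ 3 * r) * (1 / r) ^ 2 by ring]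
    exact h.imp (·.mul (IsSquare.sq _)) (·.mul (IsSquare.sq _))

theorem IsHalving.isSlope_two_mul {m s t : F} (h5 : (5 : F) ≠ 0) (h : IsHalving m s t) :
    IsSlope (2 * t) := by
  obtain ⟨-, ht, -, hst⟩ := h
  have hX : (2 * t ^ 2 + 11 + 2 * s * t) * (2 * t ^ 2 + 11 - 2 * s * t) = 125 := by
    field_simp at hst
    linear_combination -4 * hst
  have hX0 : 2 * t ^ 2 + 11 + 2 * s * t ≠ 0 :=
    left_ne_zero_of_mul (hX ▸ hundredTwentyFive_ne_zero h5)
  refine ⟨_, hX0, ?_⟩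
  rw [← hX, mul_div_cancel_left₀ _ hX0]
  ring

end Isogeny

/-! ### `2`-adic bounds -/

section Valuation

variable {F Γ : Type*} [Field F] [LinearOrderedCommGroupWithZero Γ] {v : Valuation F Γ}

theorem valuation_le_max_map_add_one (v : Valuation F Γ) {a b : F} (hab : v (a * b) = 1) :
    v a ≤ max (v (a + b)) 1 := by
  rcases le_or_gt (v a) 1 with ha | ha
  · exact le_max_of_le_right ha
  · have hba : v b < v a := by
      refine lt_of_not_ge fun h => hab.not_gt ?_
      rw [map_mul]
      exact one_lt_mul_of_lt_of_le' ha (ha.le.trans h)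
    rw [Valuation.map_add_eq_of_lt_left v hba]
    exact le_max_left _ _

theorem valuation_natCast_eq_one_of_odd (hv : v 2 < 1) {n : ℕ} (hn : Odd n) : v (n : F) = 1 := by
  obtain ⟨k, rfl⟩ := hn
  have hk : v (k : F) ≤ 1 := natCast_mem v.integer k
  push_cast
  rw [add_comm, v.map_one_add_of_lt]
  rw [map_mul]
  exact mul_lt_one_of_lt_of_le hv hk

theorem valuation_ofNat_le_one (v : Valuation F Γ) (n : ℕ) [n.AtLeastTwo] :
    v (ofNat(n) : F) ≤ 1 :=
  natCast_mem v.integer n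

theorem valuation_le_max_of_sq_eq_add_div_sub (hv : v 2 < 1) {m x : F} (hx : x ≠ 0)
    (h : m ^ 2 = x + 125 / x - 22) : v x ≤ max (v (m ^ 2)) 1 := by
  have h125 : v (x * (125 / x)) = 1 := by
    rw [mul_div_cancel₀ _ hx]
    exact valuation_natCast_eq_one_of_odd hv (n := 125) (by decide)
  refine (valuation_le_max_map_add_one v h125).trans (max_le ?_ (le_max_right _ _))
  rw [show x + 125 / x = m ^ 2 + 22 by rw [h]; ring]
  exact (v.map_add _ _).trans (max_le_max le_rfl (valuation_ofNat_le_one v 22))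

theorem valuation_le_max_of_sq_eq_sub_inv_add (v : Valuation F Γ) {s r : F} (hr : r ≠ 0)
    (h : s ^ 2 = r - 1 / r + 11) : v r ≤ max (v (s ^ 2)) 1 := by
  have h1 : v (r * (-1 / r)) = 1 := by
    rw [mul_div_cancel₀ _ hr, Valuation.map_neg, map_one]
  refine (valuation_le_max_map_add_one v h1).trans (max_le ?_ (le_max_right _ _))
  rw [show r + -1 / r = s ^ 2 - 11 by rw [h]; ring]
  exact (v.map_sub _ _).trans (max_le_max le_rfl (valuation_ofNat_le_one v 11))

theorem IsHalving.map_two_mul_le (hv : v 2 < 1) {m s t : F} (h : IsHalving m s t) :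
    v (2 * t) ≤ v 2 * max (v m) 1 := by
  obtain ⟨hs, ht, hms, hst⟩ := h
  have hsm := valuation_le_max_of_sq_eq_add_div_sub hv (pow_ne_zero 2 hs) hms
  have hts := valuation_le_max_of_sq_eq_sub_inv_add v (pow_ne_zero 2 ht) hst
  have hm : max (v (m ^ 2)) 1 ≤ max (v m) 1 ^ 2 := by
    rw [map_pow]
    exact max_le (pow_le_pow_left' (le_max_left _ _) 2) (one_le_pow₀ (le_max_right _ _))
  have htm : v t ^ 2 ≤ max (v m) 1 ^ 2 := by
    rw [← map_pow]
    exact (hts.trans (max_le hsm (le_max_right _ _))).trans hm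
  rw [map_mul]
  gcongr
  exact (pow_le_pow_iff_left₀ zero_le zero_le two_ne_zero).mp htm

theorem valuation_sub_one_le_of_map_sq_sub_one_lt_one (hv : v 2 < 1)
    (hunif : ∀ z, v z < 1 → v z ≤ v 2) {z : F} (hz : v (z ^ 2 - 1) < 1) : v (z - 1) ≤ v 2 := by
  refine hunif _ (lt_of_not_ge fun h => hz.not_ge ?_)
  have hadd : v (z + 1) = v (z - 1) := by
    rw [← v.map_add_eq_of_lt_left (hv.trans_le h)]
    congr 1
    ring
  rw [show z ^ 2 - 1 = (z + 1) * (z - 1) by ring, map_mul, hadd]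
  exact one_le_mul_of_one_le_of_one_le h h

theorem valuation_sq_sub_one_le_of_lt_one (hv : v 2 < 1) (hunif : ∀ z, v z < 1 → v z ≤ v 2)
    {z : F} (hz : v (z ^ 2 - 1) < 1) : v (z ^ 2 - 1) ≤ v 2 * v 2 := by
  have hsub := valuation_sub_one_le_of_map_sq_sub_one_lt_one hv hunif hz
  have hadd : v (z + 1) ≤ v 2 := by
    rw [show z + 1 = z - 1 + 2 by ring]
    exact v.map_add_le hsub le_rfl
  rw [show z ^ 2 - 1 = (z + 1) * (z - 1) by ring, map_mul]
  exact mul_le_mul' hadd hsub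

theorem valuation_sq_sub_one_le_of_map_lt_one (hv : v 2 < 1) (hunif : ∀ z, v z < 1 → v z ≤ v 2)
    {m s : F} (hs : s ≠ 0) (hm : v m < 1) (h : m ^ 2 = s ^ 2 + 125 / s ^ 2 - 22) :
    v (s ^ 2 - 1) ≤ v 2 * v 2 := by
  have hm2 : v (m ^ 2) < 1 := by rw [map_pow]; exact pow_lt_one' hm two_ne_zero
  have hs1 : v (s ^ 2) ≤ 1 :=
    (valuation_le_max_of_sq_eq_add_div_sub hv (pow_ne_zero 2 hs) h).trans_eq (max_eq_right hm2.le)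
  have hsq : (s ^ 2) ^ 2 - 1 = m ^ 2 * s ^ 2 + 2 * (11 * s ^ 2 - 63) := by
    rw [h]; field_simp; ring
  have hlt : v ((s ^ 2) ^ 2 - 1) < 1 := by
    rw [hsq]
    refine v.map_add_lt ?_ ?_ <;> rw [map_mul]
    · exact mul_lt_one_of_lt_of_le hm2 hs1
    · refine mul_lt_one_of_lt_of_le hv (v.map_sub_le ?_ (valuation_ofNat_le_one v 63))
      rw [map_mul]
      exact mul_le_one' (valuation_ofNat_le_one v 11) hs1
  exact valuation_sq_sub_one_le_of_lt_one hv hunif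
    ((valuation_sub_one_le_of_map_sq_sub_one_lt_one hv hunif hlt).trans_lt hv)

theorem IsHalving.not_map_lt_one [NeZero (2 : F)] (hv : v 2 < 1)
    (hunif : ∀ z, v z < 1 → v z ≤ v 2) {m s t : F} (h : IsHalving m s t) : ¬ v m < 1 := by
  intro hm
  obtain ⟨hs, ht, hms, hsr⟩ := h
  obtain ⟨r, hr_def⟩ : ∃ r, r = t ^ 2 := ⟨_, rfl⟩
  have hr : r ≠ 0 := hr_def ▸ pow_ne_zero 2 ht
  rw [← hr_def] at hsr
  have hs1 := valuation_sq_sub_one_le_of_map_lt_one hv hunif hs hm hms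
  have h22 : v 2 * v 2 < 1 := mul_lt_one_of_lt_of_le hv hv.le
  have hs0 : v (s ^ 2) ≤ 1 := by
    simpa using v.map_add_le (hs1.trans h22.le) v.map_one.le
  have hr1 : v r ≤ 1 := (valuation_le_max_of_sq_eq_sub_inv_add v hr hsr).trans_eq (max_eq_right hs0)
  have hrs : r ^ 2 - 1 = r * (s ^ 2 - 1) - 2 * 5 * r := by rw [hsr]; field_simp; ring
  have hrs1 : v (r * (s ^ 2 - 1)) ≤ v 2 * v 2 := by
    rw [map_mul]; exact mul_le_of_le_one_of_le hr1 hs1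
  have hrlt : v (r ^ 2 - 1) < 1 := by
    rw [hrs]
    refine v.map_sub_lt (hrs1.trans_lt h22) ?_
    rw [mul_assoc, map_mul, map_mul]
    exact mul_lt_one_of_lt_of_le hv (mul_le_one' (valuation_ofNat_le_one v 5) hr1)
  have hr2 := valuation_sq_sub_one_le_of_lt_one hv hunif hrlt
  have hvr : v r = 1 := by
    have := v.map_one_add_of_lt hrlt
    rw [add_sub_cancel, map_pow] at this
    exact (pow_eq_one_iff_of_nonneg zero_le two_ne_zero).mp this
  have h10 : v (2 * 5 * r) ≤ v 2 * v 2 := by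
    rw [show 2 * 5 * r = r * (s ^ 2 - 1) - (r ^ 2 - 1) by rw [hrs]; ring]
    exact v.map_sub_le hrs1 hr2
  have h5 : v (5 : F) = 1 := valuation_natCast_eq_one_of_odd hv (n := 5) (by decide)
  rw [map_mul, map_mul, hvr, h5, mul_one] at h10
  exact h10.not_gt (mul_lt_mul_of_pos_left hv ((v.pos_iff).mpr two_ne_zero))

end Valuation

open scoped WithZero in
theorem exists_valuation_le_of_prime {R K : Type*} [CommRing R] [IsDedekindDomain R] [Field K]
    [Algebra R K] [IsFractionRing R K] {p : R} (hp : Prime p) :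
    ∃ v : Valuation K ℤᵐ⁰, v (algebraMap R K p) < 1 ∧
      ∀ z, v z < 1 → v z ≤ v (algebraMap R K p) := by
  let P : IsDedekindDomain.HeightOneSpectrum R :=
    ⟨Ideal.span {p}, (Ideal.span_singleton_prime hp.ne_zero).mpr hp, by simpa using hp.ne_zero⟩
  have hv : P.valuation K (algebraMap R K p) = WithZero.exp (-1) := by
    rw [P.valuation_of_algebraMap, P.intValuation_singleton hp.ne_zero rfl]
  refine ⟨P.valuation K, ?_, fun z hz => ?_⟩
  · rw [hv, ← WithZero.exp_zero, WithZero.exp_lt_exp]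
    norm_num
  · rw [hv, ← WithZero.lt_mul_exp_iff_le WithZero.exp_ne_zero, ← WithZero.exp_add]
    simpa using hz

theorem not_of_contracting {α Γ : Type*} [LinearOrderedCommGroupWithZero Γ] [MulArchimedean Γ]
    {P : α → Prop} {f : α → Γ} {c : Γ} (hc : c < 1) (hf : ∀ a, P a → 1 ≤ f a)
    (hP : ∀ a, P a → ∃ b, P b ∧ f b ≤ c * f a) (a : α) : ¬ P a := by
  intro ha
  have hpow (n : ℕ) : ∀ a, P a → 1 ≤ c ^ n * f a := by
    induction n with
    | zero => simpa using hf
    | succ n ih =>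
      intro a ha
      obtain ⟨b, hb, hba⟩ := hP a ha
      calc 1 ≤ c ^ n * f b := ih b hb
        _ ≤ c ^ n * (c * f a) := by gcongr
        _ = c ^ (n + 1) * f a := by rw [pow_succ, mul_assoc]
  have hfa : 0 < f a := zero_lt_one.trans_le (hf a ha)
  obtain ⟨n, hn⟩ := exists_pow_lt₀ hc (Units.mk0 (f a)⁻¹ (inv_ne_zero hfa.ne'))
  refine (hpow n a ha).not_gt ?_
  rwa [Units.val_mk0, ← one_div, lt_div_iff₀ hfa] at hn

/-! ### Congruences modulo `4` -/

section PrimeTwo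

variable {R : Type*} [CommRing R]

theorem four_dvd_sq_sub_sq (h2 : Prime (2 : R)) {x y : R} (h : 2 ∣ x ^ 2 - y ^ 2) :
    4 ∣ x ^ 2 - y ^ 2 := by
  have hsq : 2 ∣ (x - y) ^ 2 := by
    convert dvd_sub h (dvd_mul_right 2 (y * (x - y))) using 1
    ring
  obtain ⟨c, hc⟩ := h2.dvd_of_dvd_pow hsq
  exact ⟨c ^ 2 + c * y, by linear_combination (x + y + 2 * c) * hc⟩

variable [IsDomain R]

theorem two_dvd_of_four_dvd_two_mul (h2 : Prime (2 : R)) {x : R} (h : 4 ∣ 2 * x) : 2 ∣ x := by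
  rwa [show (4 : R) = 2 * 2 by norm_num, mul_dvd_mul_iff_left h2.ne_zero] at h

theorem not_isSquare_one_sub_two_mul (h2 : Prime (2 : R)) {g : R} (hg : ¬ 2 ∣ g) :
    ¬ IsSquare (1 - 2 * g) := by
  rintro ⟨v, hv⟩
  have h4 : 4 ∣ 1 ^ 2 - v ^ 2 := four_dvd_sq_sub_sq h2 ⟨g, by linear_combination hv⟩
  exact hg (two_dvd_of_four_dvd_two_mul h2 (by convert h4 using 1; linear_combination -hv))

theorem two_dvd_of_sq_eq_of_two_dvd_sub (h2 : Prime (2 : R)) {g : R} (hg : ¬ 2 ∣ 1 + g + g ^ 3)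
    {a e m : R} (hm : m ^ 2 = (1 - 2 * g) * (a ^ 2 + e ^ 4)) (ha : 2 ∣ a - (1 + g) * e ^ 2) :
    2 ∣ e := by
  obtain ⟨k, hk⟩ : 4 ∣ a ^ 2 - ((1 + g) * e ^ 2) ^ 2 :=
    four_dvd_sq_sub_sq h2 (by rw [sq_sub_sq]; exact ha.mul_left _)
  obtain ⟨l, hl⟩ : 4 ∣ m ^ 2 - (g * e ^ 2) ^ 2 := four_dvd_sq_sub_sq h2
    ⟨2 * k + (1 + g) * e ^ 4 - g * (a ^ 2 + e ^ 4), by linear_combination hm + hk⟩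
  have : 2 ∣ (1 + g + g ^ 3) * e ^ 4 := two_dvd_of_four_dvd_two_mul h2
    ⟨l - (1 - 2 * g) * k + (g + g ^ 2 + g ^ 3) * e ^ 4, by
      linear_combination hl - hm - (1 - 2 * g) * hk⟩
  exact h2.dvd_of_dvd_pow ((h2.dvd_or_dvd this).resolve_left hg)

theorem two_dvd_of_sq_eq (h2 : Prime (2 : R)) {g : R} (hg : ¬ 2 ∣ g) (hg' : ¬ 2 ∣ 1 + g + g ^ 3)
    {M e n : R}
    (h : n ^ 2 = (1 - 2 * g) * (((1 - 2 * g) * M ^ 2 - 11 * e ^ 2) ^ 2 + 4 * e ^ 4)) :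
    2 ∣ M ∧ 2 ∣ e := by
  obtain ⟨A, hA⟩ : ∃ A, A = (1 - 2 * g) * M ^ 2 - 11 * e ^ 2 := ⟨_, rfl⟩
  rw [← hA] at h
  obtain ⟨a, rfl⟩ : 2 ∣ A := by
    obtain ⟨k, hk⟩ : 4 ∣ n ^ 2 - A ^ 2 :=
      four_dvd_sq_sub_sq h2 ⟨-g * A ^ 2 + 2 * (1 - 2 * g) * e ^ 4, by linear_combination h⟩
    have : 2 ∣ g * A ^ 2 := two_dvd_of_four_dvd_two_mul h2
      ⟨(1 - 2 * g) * e ^ 4 - k, by linear_combination h - hk⟩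
    exact h2.dvd_of_dvd_pow ((h2.dvd_or_dvd this).resolve_left hg)
  obtain ⟨m, rfl⟩ : 2 ∣ n := h2.dvd_of_dvd_pow (n := 2)
    ⟨2 * (1 - 2 * g) * (a ^ 2 + e ^ 4), by linear_combination h⟩
  have hm : m ^ 2 = (1 - 2 * g) * (a ^ 2 + e ^ 4) :=
    mul_left_cancel₀ (pow_ne_zero 2 h2.ne_zero) (by linear_combination h)
  have hMe : 2 ∣ M ^ 2 - e ^ 2 := ⟨a + g * M ^ 2 + 5 * e ^ 2, by linear_combination -hA⟩
  have ha : 2 ∣ a - (1 + g) * e ^ 2 := by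
    obtain ⟨k, hk⟩ := four_dvd_sq_sub_sq h2 hMe
    refine two_dvd_of_four_dvd_two_mul h2 ⟨(1 - 2 * g) * k - (3 + g) * e ^ 2, ?_⟩
    linear_combination hA + (1 - 2 * g) * hk
  have he : 2 ∣ e := two_dvd_of_sq_eq_of_two_dvd_sub h2 hg' hm ha
  exact ⟨h2.dvd_of_dvd_pow ((dvd_iff_dvd_of_dvd_sub hMe).mpr (he.pow two_ne_zero)), he⟩

theorem not_isSquare_one_sub_two_mul_mul [UniqueFactorizationMonoid R] {K : Type*} [Field K]
    [Algebra R K] [IsFractionRing R K] (h2 : Prime (2 : R)) {g : R} (hg : ¬ 2 ∣ g)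
    (hg' : ¬ 2 ∣ 1 + g + g ^ 3) {m x : K} (hx : x ≠ 0) (h : m ^ 2 = x + 125 / x - 22) :
    ¬ IsSquare (algebraMap R K (1 - 2 * g) * x) := by
  rintro ⟨w, hw⟩
  obtain ⟨δ, hδ⟩ : ∃ δ, δ = 1 - 2 * g := ⟨_, rfl⟩
  rw [← hδ] at hw
  have hδ0 : algebraMap R K δ ≠ 0 := by
    rw [Ne, FaithfulSMul.algebraMap_eq_zero_iff]
    rintro rfl
    exact h2.not_isUnit (IsUnit.of_mul_eq_one g (by linear_combination hδ))
  obtain ⟨M, e, hMe, hwMe⟩ := IsFractionRing.exists_reduced_fraction R (w / algebraMap R K δ)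
  obtain ⟨e, he⟩ := e
  rw [IsFractionRing.mk'_eq_div] at hwMe
  have heK : algebraMap R K e ≠ 0 :=
    (FaithfulSMul.algebraMap_eq_zero_iff R K).not.mpr (nonZeroDivisors.ne_zero he)
  have hxMe : x = algebraMap R K δ * (algebraMap R K M / algebraMap R K e) ^ 2 := by
    rw [hwMe]
    field_simp
    linear_combination hw
  have hM0 : algebraMap R K M ≠ 0 := by
    refine fun h0 => hx ?_
    rw [hxMe, h0, zero_div, zero_pow two_ne_zero, mul_zero]
  have hn : (m * algebraMap R K (δ * M * e)) ^ 2 =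
      algebraMap R K (δ * ((δ * M ^ 2 - 11 * e ^ 2) ^ 2 + 4 * e ^ 4)) := by
    rw [mul_pow, h, hxMe]
    simp only [map_mul, map_add, map_sub, map_pow, map_ofNat]
    field_simp
    ring
  obtain ⟨n, hn'⟩ := IsIntegrallyClosed.exists_algebraMap_eq_of_isIntegral_pow two_pos
    (hn ▸ isIntegral_algebraMap)
  rw [← hn', ← map_pow] at hn
  obtain ⟨hM2, he2⟩ := two_dvd_of_sq_eq h2 hg hg'
    (hδ ▸ FaithfulSMul.algebraMap_injective R K hn)
  exact h2.not_isUnit (hMe hM2 he2)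

end PrimeTwo

/-! ### Square classes over a principal ideal domain -/

section SquareClass

variable {R K : Type*} [CommRing R] [Field K] [Algebra R K]

theorem exists_eq_units_mul_sq {a b s t : R} (ha : Associated (s ^ 2) a)
    (hb : Associated (t ^ 2) b) :
    ∃ (u : Rˣ) (w : K), algebraMap R K a / algebraMap R K b = algebraMap R K u * w ^ 2 := by
  obtain ⟨u, rfl⟩ := ha
  obtain ⟨w, rfl⟩ := hb
  refine ⟨u * w⁻¹, algebraMap R K s / algebraMap R K t, ?_⟩
  simp only [map_mul, map_pow, Units.val_mul, div_pow, map_units_inv]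
  ring

theorem even_of_sq_eq_pow_mul [IsDomain R] {l c m : R} (hl : Prime l) (hm : ¬ l ∣ m) {n : ℕ}
    (h : c ^ 2 = l ^ n * m) : Even n := by
  have hmul := emultiplicity_pow hl (a := c) (k := 2)
  rw [h, emultiplicity_mul hl, emultiplicity_eq_zero.mpr hm, add_zero,
    emultiplicity_pow_self hl.ne_zero hl.not_isUnit] at hmul
  cases hc : emultiplicity l c with
  | top => simp [hc] at hmul
  | coe k =>
    rw [hc] at hmul
    exact ⟨k, by rw [← two_mul]; exact_mod_cast hmul⟩

end SquareClass

section PID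

open Ideal

variable {R K : Type*} [CommRing R] [IsDomain R] [IsPrincipalIdealRing R] [Field K] [Algebra R K]
  [IsFractionRing R K]

theorem exists_isCoprime_sq_eq {A B : R} {x m : K} (hx : x ≠ 0)
    (h : m ^ 2 = x + algebraMap R K A + algebraMap R K B / x) :
    ∃ a b c : R, a ≠ 0 ∧ IsCoprime a b ∧ x = algebraMap R K a / algebraMap R K b ∧
      c ^ 2 = a * b * (a ^ 2 + A * a * b + B * b ^ 2) := by
  obtain ⟨a, b, hab, hx'⟩ := IsFractionRing.exists_reduced_fraction R x
  obtain ⟨b, hb⟩ := b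
  have hb0 : b ≠ 0 := nonZeroDivisors.ne_zero hb
  rw [IsFractionRing.mk'_eq_div] at hx'
  subst hx'
  have hbK : algebraMap R K b ≠ 0 := (FaithfulSMul.algebraMap_eq_zero_iff R K).not.mpr hb0
  have haK : algebraMap R K a ≠ 0 := (div_ne_zero_iff.mp hx).1
  have hc : (m * algebraMap R K (a * b)) ^ 2 =
      algebraMap R K (a * b * (a ^ 2 + A * a * b + B * b ^ 2)) := by
    rw [mul_pow, h]
    simp only [map_mul, map_add, map_pow]
    field_simp
  obtain ⟨c, hc'⟩ := IsIntegrallyClosed.exists_algebraMap_eq_of_isIntegral_pow two_pos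
    (hc ▸ isIntegral_algebraMap)
  refine ⟨a, b, c, ?_, hab.isCoprime, rfl, FaithfulSMul.algebraMap_injective R K ?_⟩
  · rintro rfl
    simp at haK
  · rw [map_pow, hc', hc]

theorem exists_associated_sq {a d q B c : R} (had : IsCoprime a d) (haB : IsCoprime a B)
    (h : c ^ 2 = a * d * (a * q + B)) : ∃ s, Associated (s ^ 2) a := by
  refine exists_associated_pow_of_mul_eq_pow' (had.mul_right ?_) (c := c) (by rw [h, mul_assoc])
  rw [add_comm]
  exact IsCoprime.add_mul_left_right haB q

theorem exists_associated_sq_right {A B a b c : R} (hab : IsCoprime a b)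
    (h : c ^ 2 = a * b * (a ^ 2 + A * a * b + B * b ^ 2)) : ∃ s, Associated (s ^ 2) b :=
  exists_associated_sq (q := A * a + B * b) (B := a ^ 2) hab.symm hab.symm.pow_right
    (by rw [h]; ring)

theorem exists_eq_units_mul_sq_of_isUnit {A B : R} (hB : IsUnit B) {x m : K} (hx : x ≠ 0)
    (h : m ^ 2 = x + algebraMap R K A + algebraMap R K B / x) :
    ∃ (u : Rˣ) (w : K), x = algebraMap R K u * w ^ 2 := by
  obtain ⟨a, b, c, -, hab, rfl, hc⟩ := exists_isCoprime_sq_eq hx h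
  have haB : IsCoprime a (B * b ^ 2) :=
    (isCoprime_mul_unit_left_right hB _ _).mpr hab.pow_right
  obtain ⟨s, hs⟩ := exists_associated_sq (q := a + A * b) hab haB (by rw [hc]; ring)
  obtain ⟨t, ht⟩ := exists_associated_sq_right hab hc
  exact exists_eq_units_mul_sq hs ht

theorem dvd_of_dvd_sq_sub_mul_sq {l A c d : R} (hl : Prime l)
    (hA : ¬ IsSquare (Ideal.Quotient.mk (Ideal.span {l}) A)) (h : l ∣ c ^ 2 - A * d ^ 2) :
    l ∣ d := by
  have := (Ideal.span_singleton_prime hl.ne_zero).mpr hl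
  have := IsPrime.to_maximal_ideal (S := Ideal.span {l}) (by simpa using hl.ne_zero)
  let _ := Ideal.Quotient.field (Ideal.span {l})
  rw [← Ideal.mem_span_singleton, ← Ideal.Quotient.eq_zero_iff_mem] at h ⊢
  by_contra hd
  refine hA ⟨Ideal.Quotient.mk _ c / Ideal.Quotient.mk _ d, ?_⟩
  simp only [map_sub, map_mul, map_pow] at h
  field_simp
  linear_combination -h

-- For `0 < k < N` the factor `l ^ (2 * k)` can be divided out of `c ^ 2`, and what remains makes
-- `A` a square modulo `l`; for `N < k` the multiplicity of `l` in `c ^ 2` is `k + N`.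
theorem even_of_sq_eq_of_associated {l A B a b c : R} (hl : Prime l) {N k : ℕ} (hN : Even N)
    (hB : Associated (l ^ N) B) (hA : ¬ IsSquare (Ideal.Quotient.mk (Ideal.span {l}) A))
    (ha : ¬ l ∣ a) (hb : ¬ l ∣ b)
    (h : c ^ 2 = l ^ k * a * b * ((l ^ k * a) ^ 2 + A * (l ^ k * a) * b + B * b ^ 2)) :
    Even k := by
  obtain ⟨u, rfl⟩ := hB
  have hab : ¬ l ∣ a * b := hl.not_dvd_mul ha hb
  rcases Nat.eq_zero_or_pos k with rfl | hk
  · exact Even.zero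
  rcases lt_trichotomy k N with hkN | rfl | hkN
  · exfalso
    obtain ⟨j, rfl⟩ := Nat.exists_eq_add_of_lt hkN
    obtain ⟨i, rfl⟩ : ∃ i, k = i + 1 := Nat.exists_eq_add_one.mpr hk
    obtain ⟨d, rfl⟩ : l ^ (i + 1) ∣ c := by
      rw [← IsIntegrallyClosed.pow_dvd_pow_iff (n := 2) two_ne_zero]
      refine ⟨a * b * (l ^ (i + 1) * a ^ 2 + A * a * b + l ^ (j + 1) * u * b ^ 2), ?_⟩
      rw [h]; ring
    have hd : d ^ 2 = a * b * (l ^ (i + 1) * a ^ 2 + A * a * b + l ^ (j + 1) * u * b ^ 2) := by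
      apply mul_left_cancel₀ (pow_ne_zero 2 (pow_ne_zero (i + 1) hl.ne_zero))
      linear_combination h
    refine hab (dvd_of_dvd_sq_sub_mul_sq hl hA (c := d)
      ⟨a * b * (l ^ i * a ^ 2 + l ^ j * u * b ^ 2), ?_⟩)
    rw [hd]; ring
  · exact hN
  · obtain ⟨j, rfl⟩ := Nat.exists_eq_add_of_lt hkN
    have hnd : ¬ l ∣ a * b * (l * (l ^ j * (l ^ (N + j + 1) * a ^ 2 + A * a * b)) + u * b ^ 2) := by
      refine hl.not_dvd_mul hab ?_
      rw [dvd_add_right (Dvd.intro _ rfl)]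
      refine hl.not_dvd_mul (fun hu => hl.not_isUnit (isUnit_of_dvd_unit hu u.isUnit)) ?_
      exact fun h => hb (hl.dvd_of_dvd_pow h)
    have := even_of_sq_eq_pow_mul hl hnd (n := N + j + 1 + N) (c := c) (by rw [h]; ring)
    exact (Nat.even_add.mp this).mpr hN

theorem exists_eq_units_mul_sq_of_associated {l A B : R} (hl : Prime l) {N : ℕ} (hN : Even N)
    (hB : Associated (l ^ N) B) (hA : ¬ IsSquare (Ideal.Quotient.mk (Ideal.span {l}) A))
    {x m : K} (hx : x ≠ 0) (h : m ^ 2 = x + algebraMap R K A + algebraMap R K B / x) :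
    ∃ (u : Rˣ) (w : K), x = algebraMap R K u * w ^ 2 := by
  obtain ⟨a, b, c, ha0, hab, rfl, hc⟩ := exists_isCoprime_sq_eq hx h
  obtain ⟨k, a, hla, rfl⟩ := WfDvdMonoid.max_power_factor ha0 hl.irreducible
  have hal : IsCoprime a l := ((Prime.coprime_iff_not_dvd hl).mpr hla).symm
  have hab' : IsCoprime a b := hab.of_mul_left_right
  have haB : IsCoprime a B := by
    obtain ⟨u, rfl⟩ := hB
    exact (isCoprime_mul_unit_right_right u.isUnit _ _).mpr hal.pow_right
  obtain ⟨s, hs⟩ := exists_associated_sq (q := l ^ k * (l ^ k * a + A * b)) (d := l ^ k * b)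
    (B := B * b ^ 2) (hal.pow_right.mul_right hab') (haB.mul_right hab'.pow_right)
    (by rw [hc]; ring)
  obtain ⟨t, ht⟩ := exists_associated_sq_right hab hc
  have hk : Even k := by
    rcases Nat.eq_zero_or_pos k with rfl | hk
    · exact Even.zero
    · refine even_of_sq_eq_of_associated hl hN hB hA hla (fun hlb => ?_) hc
      exact hl.not_isUnit (hab.isUnit_of_dvd' ((dvd_pow_self l hk.ne').mul_right a) hlb)
  obtain ⟨j, rfl⟩ := hk
  refine exists_eq_units_mul_sq (s := l ^ j * s) ?_ ht
  rw [mul_pow, ← pow_mul, mul_two]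
  exact hs.mul_left _

end PID

/-! ### Units and inert primes -/

section Units

variable {R : Type*} [CommRing R]

theorem isSquare_or_isSquare_neg_mul {a b : Rˣ} (ha : IsSquare a ∨ IsSquare (-a))
    (hb : IsSquare b ∨ IsSquare (-b)) : IsSquare (a * b) ∨ IsSquare (-(a * b)) := by
  rcases ha with ha | ha <;> rcases hb with hb | hb
  · exact .inl (ha.mul hb)
  · exact .inr (mul_neg a b ▸ ha.mul hb)
  · exact .inr (neg_mul a b ▸ ha.mul hb)
  · exact .inl (neg_mul_neg a b ▸ ha.mul hb)

theorem isSquare_or_isSquare_neg_of_mul_isSquare {a b : Rˣ} (hb : IsSquare b)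
    (h : IsSquare (a * b) ∨ IsSquare (-(a * b))) : IsSquare a ∨ IsSquare (-a) := by
  simpa using isSquare_or_isSquare_neg_mul h (.inl (isSquare_inv.mpr hb))

theorem isSquare_or_isSquare_neg_of_generator {η : Rˣ}
    (hη : ∀ u : Rˣ, ∃ k : ℤ, IsSquare (u * η ^ k) ∨ IsSquare (-(u * η ^ k))) {a : Rˣ}
    (ha : ¬ (IsSquare a ∨ IsSquare (-a))) (u : Rˣ) :
    (IsSquare u ∨ IsSquare (-u)) ∨ (IsSquare (a * u) ∨ IsSquare (-(a * u))) := by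
  have hcases (w : Rˣ) :
      (IsSquare w ∨ IsSquare (-w)) ∨ (IsSquare (w * η) ∨ IsSquare (-(w * η))) := by
    obtain ⟨k, hk⟩ := hη w
    rcases Int.even_or_odd k with hk' | ⟨j, rfl⟩
    · exact .inl (isSquare_or_isSquare_neg_of_mul_isSquare (hk'.isSquare_zpow η) hk)
    · refine .inr (isSquare_or_isSquare_neg_of_mul_isSquare ((even_two_mul j).isSquare_zpow η) ?_)
      rwa [mul_assoc, ← zpow_one_add, add_comm]
  refine (hcases u).imp_right fun hu => ?_
  refine isSquare_or_isSquare_neg_of_mul_isSquare (IsSquare.mul_self η) ?_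
  rw [mul_mul_mul_comm]
  exact isSquare_or_isSquare_neg_mul ((hcases a).resolve_left ha) hu

theorem coe_pow_three {φ : Rˣ} (hφ : (φ : R) ^ 2 = φ + 1) :
    ((φ ^ 3 : Rˣ) : R) = 1 - 2 * (-φ : Rˣ) := by
  push_cast
  linear_combination ((φ : R) + 1) * hφ

theorem coe_neg_pow_three {φ : Rˣ} (hφ : (φ : R) ^ 2 = φ + 1) :
    ((-φ ^ 3 : Rˣ) : R) = 1 - 2 * (φ ^ 2 : Rˣ) := by
  push_cast
  linear_combination (1 - (φ : R)) * hφ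

end Units

theorem ideal_eq_of_le_of_absNorm_eq {S : Type*} [CommRing S] [IsDedekindDomain S]
    [Module.Free ℤ S] {I J : Ideal S} (hIJ : I ≤ J) (h : Ideal.absNorm J = Ideal.absNorm I)
    (hI : Ideal.absNorm I ≠ 0) : I = J := by
  obtain ⟨Q, rfl⟩ := Ideal.dvd_iff_le.mpr hIJ
  have hQ : Ideal.absNorm Q = 1 :=
    Nat.eq_of_mul_eq_mul_left (Nat.pos_of_ne_zero (h ▸ hI)) (by rw [← map_mul, ← h, mul_one])
  rw [Ideal.absNorm_eq_one_iff.mp hQ, Ideal.mul_top]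

section NumberField

variable {K : Type*} [Field K] [NumberField K]

theorem isSquare_or_isSquare_neg_of_mem_torsion {n : ℕ} [NeZero n] (hn : Odd n)
    [IsCyclotomicExtension {n} ℚ K] {u : (𝓞 K)ˣ} (hu : u ∈ Units.torsion K) :
    IsSquare u ∨ IsSquare (-u) := by
  obtain ⟨k, rfl⟩ := hn
  have hsq : (u ^ (2 * k + 1)) ^ 2 = 1 := by
    have h := pow_card_eq_one' (x := (⟨u, hu⟩ : Units.torsion K))
    rw [← Units.torsionOrder, IsCyclotomicExtension.Rat.torsionOrder_eq (n := 2 * k + 1),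
      if_neg (by grind), mul_comm, pow_mul] at h
    exact congrArg Subtype.val h
  refine isSquare_or_isSquare_neg_of_mul_isSquare (IsSquare.sq (u ^ k)) ?_
  rw [← pow_mul, ← pow_succ', mul_comm k]
  rcases (Units.inv_eq_self_iff _).mp (inv_eq_of_mul_eq_one_left ((sq _).symm.trans hsq)) with h | h
  · exact .inl (h ▸ IsSquare.one)
  · exact .inr (by rw [h, neg_neg]; exact IsSquare.one)

theorem exists_mul_zpow_mem_torsion (hK : Units.rank K = 1) :
    ∃ η : (𝓞 K)ˣ, ∀ u : (𝓞 K)ˣ, ∃ k : ℤ, u * η ^ k ∈ Units.torsion K := by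
  have : Unique (Fin (Units.rank K)) := by rw [hK]; infer_instance
  refine ⟨Units.fundSystem K default, fun u => ?_⟩
  obtain ⟨⟨z, f⟩, h, -⟩ := Units.exist_unique_eq_mul_prod K u
  refine ⟨-f default, ?_⟩
  rw [Fintype.prod_unique] at h
  rw [h, mul_assoc, ← zpow_add, add_neg_cancel, zpow_zero, mul_one]
  exact z.2

theorem prime_natCast_of_orderOf_eq_totient {n p : ℕ} [NeZero n] [Fact p.Prime]
    [IsCyclotomicExtension {n} ℚ K] (hpn : ¬ p ∣ n) (hp : orderOf (p : ZMod n) = n.totient) :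
    Prime (p : 𝓞 K) := by
  have hp0 : (p : 𝓞 K) ≠ 0 := Nat.cast_ne_zero.mpr (Fact.out : p.Prime).ne_zero
  have : (Ideal.span {(p : ℤ)}).IsPrime :=
    (Ideal.span_singleton_prime (by exact_mod_cast (Fact.out : p.Prime).ne_zero)).mpr
      (Nat.prime_iff_prime_int.mp Fact.out)
  obtain ⟨⟨P, hP, hPp⟩⟩ := (Ideal.span {(p : ℤ)}).nonempty_primesOver (S := 𝓞 K)
  have hpP : Ideal.span {(p : 𝓞 K)} ≤ P := by
    rw [Ideal.span_singleton_le_iff_mem]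
    simpa using (Ideal.mem_of_liesOver P (Ideal.span {(p : ℤ)}) p).mp
      (Ideal.mem_span_singleton_self _)
  have hnorm : Ideal.absNorm P = Ideal.absNorm (Ideal.span {(p : 𝓞 K)}) := by
    rw [Ideal.absNorm_span_natCast, RingOfIntegers.rank, IsCyclotomicExtension.Rat.finrank n,
      ← Ideal.pow_inertiaDeg p P, IsCyclotomicExtension.Rat.inertiaDeg_eq_of_not_dvd p K P hpn, hp]
  have hspan : Ideal.absNorm (Ideal.span {(p : 𝓞 K)}) ≠ 0 := by
    rwa [Ne, Ideal.absNorm_eq_zero_iff, Ideal.span_singleton_eq_bot]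
  rwa [← Ideal.span_singleton_prime hp0, ideal_eq_of_le_of_absNorm_eq hpP hnorm hspan]

end NumberField

/-! ### The fifth cyclotomic field -/

namespace FifthCyclotomic

variable {K : Type*} [Field K] [NumberField K] [IsCyclotomicExtension {5} ℚ K]

variable (K) in
theorem prime_two : Prime (2 : 𝓞 K) := by
  have h : orderOf (2 : ZMod 5) = 4 :=
    orderOf_eq_prime_pow (p := 2) (n := 1) (by decide) (by decide)
  exact_mod_cast prime_natCast_of_orderOf_eq_totient (K := K) (n := 5) (p := 2) (by norm_num)
    (by exact_mod_cast h)

variable (K) in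
theorem rank_eq_one : Units.rank K = 1 := by
  rw [Units.rank, InfinitePlace.card_eq_nrRealPlaces_add_nrComplexPlaces,
    IsCyclotomicExtension.Rat.nrRealPlaces_eq_zero (n := 5) K (by norm_num),
    IsCyclotomicExtension.Rat.nrComplexPlaces_eq_totient_div_two 5]
  rfl

theorem not_isSquare_neg_twentyTwo {ζ : K} (hζ : IsPrimitiveRoot ζ 5) :
    ¬ IsSquare (Ideal.Quotient.mk (Ideal.span {hζ.toInteger - 1}) (-22)) := by
  have h22 : ¬ IsSquare (-22 : ZMod 5) := by decide
  have : Fact (Nat.Prime 5) := ⟨Nat.prime_five⟩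
  have hcard : Nat.card (𝓞 K ⧸ Ideal.span {hζ.toInteger - 1}) = 5 := by
    rw [hζ.card_quotient_toInteger_sub_one,
      hζ.norm_toInteger_sub_one_of_prime_ne_two' (by norm_num)]
    rfl
  have : Finite (𝓞 K ⧸ Ideal.span {hζ.toInteger - 1}) :=
    Nat.finite_of_card_ne_zero (by rw [hcard]; norm_num)
  have := Fintype.ofFinite (𝓞 K ⧸ Ideal.span {hζ.toInteger - 1})
  let e := ZMod.ringEquivOfPrime (𝓞 K ⧸ Ideal.span {hζ.toInteger - 1}) Nat.prime_five
    (Nat.card_eq_fintype_card.symm.trans hcard)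
  exact fun h => h22 (by simpa only [map_neg, map_ofNat] using h.map e.symm)

variable (K) in
theorem exists_unit_sq_eq_add_one : ∃ φ : (𝓞 K)ˣ, (φ : 𝓞 K) ^ 2 = φ + 1 := by
  have hζ := IsCyclotomicExtension.zeta_spec 5 ℚ K
  have hz := hζ.toInteger_isPrimitiveRoot.geom_sum_eq_zero (by norm_num)
  simp only [Finset.sum_range_succ, Finset.sum_range_zero] at hz
  generalize hζ.toInteger = z at hz
  have hφ : (-(z ^ 2 + z ^ 3)) ^ 2 = -(z ^ 2 + z ^ 3) + 1 := by
    linear_combination (z ^ 2 + z - 1) * hz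
  exact ⟨.mkOfMulEqOne _ (-(z ^ 2 + z ^ 3) - 1) (by linear_combination hφ), hφ⟩

theorem not_two_dvd_of_eq_unit_add_two_mul {a d : 𝓞 K} {u : (𝓞 K)ˣ} (h : a = u + 2 * d) :
    ¬ 2 ∣ a := by
  rw [h, dvd_add_left (dvd_mul_right 2 d)]
  exact fun h => (prime_two K).not_isUnit (isUnit_of_dvd_unit h u.isUnit)

theorem not_two_dvd_unit (u : (𝓞 K)ˣ) : ¬ (2 : 𝓞 K) ∣ u :=
  not_two_dvd_of_eq_unit_add_two_mul (d := 0) (u := u) (by ring)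

variable {φ : (𝓞 K)ˣ}

theorem not_isSquare_pow_three_or_neg (hφ : (φ : 𝓞 K) ^ 2 = φ + 1) :
    ¬ (IsSquare (φ ^ 3) ∨ IsSquare (-φ ^ 3)) := by
  rintro (h | h) <;> replace h := h.map (Units.coeHom (𝓞 K))
  · rw [Units.coeHom_apply, coe_pow_three hφ] at h
    exact not_isSquare_one_sub_two_mul (prime_two K) (not_two_dvd_unit _) h
  · rw [Units.coeHom_apply, coe_neg_pow_three hφ] at h
    exact not_isSquare_one_sub_two_mul (prime_two K) (not_two_dvd_unit _) h

theorem isSquare_or_isSquare_pow_three_mul (hφ : (φ : 𝓞 K) ^ 2 = φ + 1) (u : (𝓞 K)ˣ) :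
    (IsSquare u ∨ IsSquare (-u)) ∨ (IsSquare (φ ^ 3 * u) ∨ IsSquare (-(φ ^ 3 * u))) := by
  obtain ⟨η, hη⟩ := exists_mul_zpow_mem_torsion (rank_eq_one K)
  refine isSquare_or_isSquare_neg_of_generator (η := η) (fun u => ?_)
    (not_isSquare_pow_three_or_neg hφ) u
  obtain ⟨k, hk⟩ := hη u
  exact ⟨k, isSquare_or_isSquare_neg_of_mem_torsion (n := 5) (by decide) hk⟩

theorem isSquare_or_isSquare_pow_three_mul_of_eq_units_mul_sq (hφ : (φ : 𝓞 K) ^ 2 = φ + 1) {x : K}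
    (hx : ∃ (u : (𝓞 K)ˣ) (w : K), x = algebraMap (𝓞 K) K u * w ^ 2) :
    (IsSquare x ∨ IsSquare (-x)) ∨
      (IsSquare (algebraMap (𝓞 K) K φ ^ 3 * x) ∨ IsSquare (-(algebraMap (𝓞 K) K φ ^ 3 * x))) := by
  obtain ⟨u, w, rfl⟩ := hx
  have hmap {c : (𝓞 K)ˣ} (hc : IsSquare c) : IsSquare (algebraMap (𝓞 K) K c * w ^ 2) :=
    ((hc.map (Units.coeHom _)).map (algebraMap _ _)).mul (IsSquare.sq w)
  refine (isSquare_or_isSquare_pow_three_mul hφ u).imp (Or.imp hmap fun h => ?_)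
    (Or.imp (fun h => ?_) fun h => ?_)
  all_goals
    convert hmap h using 1
    push_cast [map_neg, map_mul, map_pow]
    ring

theorem exists_eq_units_mul_sq_of_slope {m x : K} (hx : x ≠ 0)
    (h : m ^ 2 = x + 125 / x - 22) :
    ∃ (u : (𝓞 K)ˣ) (w : K), x = algebraMap (𝓞 K) K u * w ^ 2 := by
  have : Fact (Nat.Prime 5) := ⟨Nat.prime_five⟩
  have := IsCyclotomicExtension.Rat.five_pid K
  have hζ := IsCyclotomicExtension.zeta_spec 5 ℚ K
  have h125 : Associated ((hζ.toInteger - 1) ^ 12) (125 : 𝓞 K) := by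
    rw [show (125 : 𝓞 K) = ((5 : ℕ) : 𝓞 K) ^ 3 by norm_num, show 12 = (5 - 1) * 3 by rfl, pow_mul]
    exact (IsCyclotomicExtension.Rat.associated_zeta_sub_one_pow_prime 5 hζ).pow_pow
  refine exists_eq_units_mul_sq_of_associated hζ.zeta_sub_one_prime' (by decide) h125
    (not_isSquare_neg_twentyTwo hζ) hx (m := m) ?_
  rw [h, map_neg, map_ofNat, map_ofNat]
  ring

theorem isSquare_of_sq_eq_add_div_sub (hφ : (φ : 𝓞 K) ^ 2 = φ + 1) {m x : K} (hx : x ≠ 0)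
    (h : m ^ 2 = x + 125 / x - 22) : IsSquare x := by
  have := IsCyclotomicExtension.Rat.five_pid K
  have hnot (u c v : (𝓞 K)ˣ) (d : 𝓞 K) (hc : (c : 𝓞 K) = 1 - 2 * u)
      (hv : (1 + u + u ^ 3 : 𝓞 K) = v + 2 * d) : ¬ IsSquare (algebraMap (𝓞 K) K c * x) :=
    hc ▸ not_isSquare_one_sub_two_mul_mul (prime_two K) (not_two_dvd_unit u)
      (not_two_dvd_of_eq_unit_add_two_mul hv) hx h
  have h1 := hnot 1 (-1) 1 1 (by push_cast; ring) (by push_cast; ring)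
  have hφ1 := hnot (-φ) (φ ^ 3) (-φ) (-φ) (coe_pow_three hφ)
    (by push_cast; linear_combination -((φ : 𝓞 K) + 1) * hφ)
  have hφ2 := hnot (φ ^ 2) (-φ ^ 3) (φ ^ 2) (4 * φ + 3) (coe_neg_pow_three hφ)
    (by push_cast; linear_combination ((φ : 𝓞 K) ^ 4 + φ ^ 3 + 2 * φ ^ 2 + 3 * φ + 5) * hφ)
  rcases isSquare_or_isSquare_pow_three_mul_of_eq_units_mul_sq hφ
    (exists_eq_units_mul_sq_of_slope hx h) with (h | h) | (h | h)
  · exact h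
  · exact absurd (by simpa using h) h1
  · exact absurd (by simpa using h) hφ1
  · exact absurd (by simpa using h) hφ2

theorem exists_isHalving_of_isSlope (hφ : (φ : 𝓞 K) ^ 2 = φ + 1) {m : K} (hm : IsSlope m) :
    ∃ s t, IsHalving m s t := by
  have := IsCyclotomicExtension.Rat.five_pid K
  refine exists_isHalving (φ := algebraMap (𝓞 K) K φ) (by norm_num) ?_
    (fun m x => isSquare_of_sq_eq_add_div_sub hφ) (fun s r hr h => ?_) hm
  · rw [← map_pow, hφ, map_add, map_one]
  · refine isSquare_or_isSquare_pow_three_mul_of_eq_units_mul_sq hφ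
      (exists_eq_units_mul_sq_of_isUnit (A := 11) (B := -1) isUnit_one.neg hr (m := s) ?_)
    rw [h, map_ofNat, map_neg, map_one]
    ring

theorem not_isSlope (m : K) : ¬ IsSlope m := by
  obtain ⟨φ, hφ⟩ := exists_unit_sq_eq_add_one K
  obtain ⟨v, hv, hunif⟩ := exists_valuation_le_of_prime (K := K) (prime_two K)
  rw [map_ofNat] at hv hunif
  have hone (m : K) (hm : IsSlope m) : 1 ≤ v m := by
    obtain ⟨s, t, h⟩ := exists_isHalving_of_isSlope hφ hm
    exact not_lt.mp (h.not_map_lt_one hv hunif)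
  refine not_of_contracting hv hone (fun m hm => ?_) m
  obtain ⟨s, t, h⟩ := exists_isHalving_of_isSlope hφ hm
  exact ⟨2 * t, h.isSlope_two_mul (by norm_num),
    (h.map_two_mul_le hv).trans_eq (by rw [max_eq_left (hone m hm)])⟩

end FifthCyclotomic

theorem stmt_15_general {K : Type*} [Field K] [NumberField K] [IsCyclotomicExtension {5} ℚ K]
    {x y : K} (h : -5 * y ^ 2 = x * (x ^ 2 + 22 * x + 125)) : x = 0 ∧ y = 0 := by
  obtain ⟨φ, hφ⟩ := FifthCyclotomic.exists_unit_sq_eq_add_one K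
  have hφK : algebraMap (𝓞 K) K φ ^ 2 = algebraMap (𝓞 K) K φ + 1 := by
    rw [← map_pow, hφ, map_add, map_one]
  have hx : x = 0 := by
    by_contra hx
    refine FifthCyclotomic.not_isSlope ((2 * algebraMap (𝓞 K) K φ - 1) * y / x)
      ⟨-x, neg_ne_zero.mpr hx, ?_⟩
    field_simp
    linear_combination 4 * y ^ 2 * hφK - h
  subst hx
  simpa using h

/-- The determination of `ℚ(ζ₅)`-points used in the proof of Proposition 7.2: the only
pair `(x, y)` in the fifth cyclotomic field `L = ℚ(ζ₅)` with `-5y² = x(x² + 22x + 125)`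
is `(0, 0)`. -/
theorem stmt_15 (x y : CyclotomicField 5 ℚ)
    (h : -5 * y ^ 2 = x * (x ^ 2 + 22 * x + 125)) :
    x = 0 ∧ y = 0 := by
  have : IsCyclotomicExtension {5} ℚ (CyclotomicField 5 ℚ) :=
    CyclotomicField.isCyclotomicExtension 5 ℚ
  exact stmt_15_general h
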